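/- arXiv:1710.09431 — 5 statements merged into one kernel-verified Lean document; each statement's English description precedes it below -/
import Mathlib

section
/- Let N, R be positive integers, let v^(1),...,v^(N) be pairwise distinct vectors in (ℕ ∪ {0})^R, and let Ω be a positive integer. Define, for i,j ∈ [N], the nonnegative integer e_{ij} = ∑_{r=1}^R Ω^r · v^(i)_r · v^(j)_r. Then for all values of z ∈ ℝ except a finite set, the N×N matrix with entries (z^{e_{ij}})_{i,j} is nonsingular. -/
/-!
The determinant is the evaluation at `z` of the polynomial `P = det (X ^ e i j)`, so it suffices
that `P ≠ 0`. In the Leibniz expansion the permutation `σ` contributes the monomial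
`± X ^ (∑ i, e (σ i) i)`. For the form `e i j = ∑ r, Ω ^ (r + 1) * v i r * v j r`,
`2 * (∑ i, e i i - ∑ i, e (σ i) i) = ∑ i, ∑ r, Ω ^ (r + 1) * (v (σ i) r - v i r) ^ 2`,
a sum of nonnegative terms that vanishes only if `v (σ i) = v i` for all `i`, that is, `σ = 1`.
Hence the identity is the only permutation of degree `∑ i, e i i`, and the coefficient of `P`
in that degree is `1`.
-/

/-- Equality case of the rearrangement-type inequality `∑ i, e (σ i) i ≤ ∑ i, e i i`. -/
lemma perm_eq_one_of_sum_exponent_eq {N R : ℕ} (v : Fin N → Fin R → ℕ)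
    (hdist : Function.Injective v) {Ω : ℕ} (hΩ : 0 < Ω) (σ : Equiv.Perm (Fin N))
    (h : ∑ i, ∑ r : Fin R, Ω ^ ((r : ℕ) + 1) * v (σ i) r * v i r
      = ∑ i, ∑ r : Fin R, Ω ^ ((r : ℕ) + 1) * v i r * v i r) : σ = 1 := by
  have hz : ∑ i, ∑ r : Fin R, (Ω : ℤ) ^ ((r : ℕ) + 1) * v (σ i) r * v i r
      = ∑ i, ∑ r : Fin R, (Ω : ℤ) ^ ((r : ℕ) + 1) * v i r * v i r := by
    exact_mod_cast h
  have hσ : ∑ i, ∑ r : Fin R, (Ω : ℤ) ^ ((r : ℕ) + 1) * v (σ i) r * v (σ i) r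
      = ∑ i, ∑ r : Fin R, (Ω : ℤ) ^ ((r : ℕ) + 1) * v i r * v i r :=
    Equiv.sum_comp σ fun i => ∑ r : Fin R, (Ω : ℤ) ^ ((r : ℕ) + 1) * v i r * v i r
  have hsq : ∑ i, ∑ r : Fin R, (Ω : ℤ) ^ ((r : ℕ) + 1) * ((v (σ i) r : ℤ) - v i r) ^ 2 = 0 := by
    have hexp : ∑ i, ∑ r : Fin R, (Ω : ℤ) ^ ((r : ℕ) + 1) * ((v (σ i) r : ℤ) - v i r) ^ 2
        = ∑ i, ∑ r : Fin R, (Ω : ℤ) ^ ((r : ℕ) + 1) * v (σ i) r * v (σ i) r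
          + ∑ i, ∑ r : Fin R, (Ω : ℤ) ^ ((r : ℕ) + 1) * v i r * v i r
          - 2 * ∑ i, ∑ r : Fin R, (Ω : ℤ) ^ ((r : ℕ) + 1) * v (σ i) r * v i r := by
      simp only [Finset.mul_sum, ← Finset.sum_add_distrib, ← Finset.sum_sub_distrib]
      refine Finset.sum_congr rfl fun i _ => Finset.sum_congr rfl fun r _ => ?_
      ring
    rw [hexp, hσ, hz]
    ring
  ext1 i
  apply hdist
  funext r
  rw [Finset.sum_eq_zero_iff_of_nonneg fun i _ => Finset.sum_nonneg fun r _ => by positivity]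
    at hsq
  have hi := hsq i (Finset.mem_univ i)
  rw [Finset.sum_eq_zero_iff_of_nonneg fun r _ => by positivity] at hi
  have hir := hi r (Finset.mem_univ r)
  have hpos : (Ω : ℤ) ^ ((r : ℕ) + 1) ≠ 0 := by positivity
  have h0 := pow_eq_zero_iff (two_ne_zero) |>.1 ((mul_eq_zero.1 hir).resolve_left hpos)
  simp only [Equiv.Perm.one_apply]
  omega

open Polynomial in
/-- If the identity is the only permutation reaching its total exponent in the Leibniz expansion,
then the determinant of the matrix of monomials is a nonzero polynomial. -/
lemma det_X_pow_ne_zero {N : ℕ} (e : Fin N → Fin N → ℕ)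
    (he : ∀ σ : Equiv.Perm (Fin N), ∑ i, e (σ i) i = ∑ i, e i i → σ = 1) :
    (Matrix.of fun i j : Fin N => (X : ℝ[X]) ^ e i j).det ≠ 0 := by
  intro h
  have hc := congrArg (fun p => p.coeff (∑ i, e i i)) h
  simp only [Matrix.det_apply, Matrix.of_apply, Finset.prod_pow_eq_pow_sum, finsetSum_coeff,
    coeff_zero] at hc
  rw [Finset.sum_eq_single 1] at hc
  · simp at hc
  · intro σ _ hσ
    have hne : ∑ i, e i i ≠ ∑ i, e (σ i) i := fun hs => hσ (he σ hs.symm)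
    rw [coeff_smul, coeff_X_pow, if_neg hne, smul_zero]
  · simp

/-- Given pairwise distinct vectors `v^(1), …, v^(N)` of nonnegative integers
in `ℕ^R` and a positive integer `Ω`, set `e i j = ∑_{r=1}^R Ω^r ⬝ v^(i)_r ⬝ v^(j)_r`.
Then for all real `z` outside a finite set, the `N×N` matrix `(z^{e i j})_{i,j}` is
nonsingular. -/
theorem monomial_matrix_generically_nonsingular (N R : ℕ) (hN : 0 < N) (hR : 0 < R)
    (v : Fin N → Fin R → ℕ) (hdist : Function.Injective v)
    (Ω : ℕ) (hΩ : 0 < Ω) :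
    {z : ℝ | (Matrix.of fun i j : Fin N =>
        z ^ (∑ r : Fin R, Ω ^ ((r : ℕ) + 1) * v i r * v j r)).det = 0}.Finite := by
  have hP := det_X_pow_ne_zero
    (fun i j : Fin N => ∑ r : Fin R, Ω ^ ((r : ℕ) + 1) * v i r * v j r)
    (fun σ => perm_eq_one_of_sum_exponent_eq v hdist hΩ σ)
  refine (Polynomial.finite_setOfPred_isRoot hP).subset fun z hz => ?_
  rw [Set.mem_ofPred_eq] at hz
  rw [Set.mem_ofPred_eq, Polynomial.IsRoot.def, ← Polynomial.coe_evalRingHom, RingHom.map_det,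
    ← hz]
  congr 1
  ext i j
  simp
end

section
/- Let R̄ and M be positive integers, let T be an even positive integer, and let Z ∈ ℝ^{R̄×M}. Define the order-T tensor A by A_{d_1,...,d_T} = ∏_{t=T/2+1}^{T} ∑_{r=1}^{R̄} ∏_{j=1}^{t} Z_{r d_j}, for indices d_1,...,d_T ∈ [M]. Then A_{d_1,...,d_T} = ∑_{p^{(T/2)} ∈ P_{R̄,T/2}} ∑_{(p^{(T/2−1)},...,p^{(1)}) ∈ T(p^{(T/2)})} ∏_{r=1}^{R̄} ( ∏_{j=1}^{T/2} Z_{r d_j}^{p^{(T/2)}_r} ) · ( ∏_{j=T/2+1}^{T} Z_{r d_j}^{p^{(T−j+1)}_r} ). -/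
/-!
Write `T = 2K`. Expanding the product of sums gives a sum over colorings `g : Fin K → Fin R̄`,
where `g k` is the color `r` chosen in the factor `t = T - k`. Let `colorCount g m r` be the number
of `k < m` with `g k = r`. In the term of `g`, the entry `Z r (d j)` is picked up once for each
`t ≥ j` of color `r`, that is for each `k < T - j + 1` with `g k = r`, so its exponent is
`colorCount g (T - j + 1) r`; for `j ≤ K` this is the full count `colorCount g K r`
(`prod_coloring`).

The states `m ↦ colorCount g m` for `m = 1, …, K` form a trajectory, and every trajectory arises
from exactly one coloring: consecutive states differ by a single ball, whose color is `g k`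
(`exists_coloring`, `coloring_injective`). Reindexing the sum along this bijection gives the claim.
-/

/-- `stateSet R K` is the set `P_{R,K}` of `R`-tuples of nonnegative integers summing to `K`
(the possible states of a bucket with `K` balls of `R` colors). -/
def stateSet (R K : ℕ) : Finset (Fin R → ℕ) :=
  (Fintype.piFinset fun _ : Fin R => Finset.range (K + 1)).filter fun p => ∑ r, p r = K

/-- `pad q m` reads off the level-`m` state (1-indexed) of a chain `q : Fin K → Fin R → ℕ`,
returning the zero state out of range. -/
def pad {R K : ℕ} (q : Fin K → Fin R → ℕ) : ℕ → Fin R → ℕ :=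
  fun m => if h : m - 1 < K then q ⟨m - 1, h⟩ else fun _ => 0

/-- `chainSet R K p` encodes the trajectory set `T(p)` for a top state `p ∈ P_{R,K}`:
full chains `(p^{(1)}, …, p^{(K)})` with `p^{(k)} ∈ P_{R,k}`, entrywise monotone in `k`,
and whose top element `p^{(K)}` equals `p`; `q k` holds `p^{(k+1)}`. -/
def chainSet (R K : ℕ) (p : Fin R → ℕ) : Finset (Fin K → Fin R → ℕ) :=
  (Fintype.piFinset fun _ : Fin K => Fintype.piFinset fun _ : Fin R => Finset.range (K + 1)).filter
    fun q => (∀ k : Fin K, ∑ r, q k r = (k : ℕ) + 1) ∧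
      (∀ k l : Fin K, (l : ℕ) = (k : ℕ) + 1 → ∀ r, q k r ≤ q l r) ∧
      (∀ k : Fin K, (k : ℕ) = K - 1 → q k = p)

/-- The number of balls of color `r` among the first `m` balls of the coloring `g`. -/
def colorCount {R K : ℕ} (g : Fin K → Fin R) (m : ℕ) (r : Fin R) : ℕ :=
  (Finset.univ.filter fun k : Fin K => (k : ℕ) < m ∧ g k = r).card

lemma colorCount_zero {R K : ℕ} (g : Fin K → Fin R) (r : Fin R) : colorCount g 0 r = 0 := by
  simp [colorCount]

lemma colorCount_succ {R K : ℕ} (g : Fin K → Fin R) (k : Fin K) (r : Fin R) :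
    colorCount g (k + 1) r = colorCount g k r + if g k = r then 1 else 0 := by
  unfold colorCount
  split_ifs with h
  · rw [← Finset.card_insert_of_notMem (a := k) (by simp)]
    congr 1
    ext x
    simp only [Finset.mem_filter, Finset.mem_univ, true_and, Finset.mem_insert, Fin.ext_iff]
    constructor
    · rintro ⟨h1, h2⟩
      by_cases hx : (x : ℕ) = k
      · exact Or.inl hx
      · exact Or.inr ⟨by omega, h2⟩
    · rintro (h1 | ⟨h1, h2⟩)
      · obtain rfl : x = k := Fin.ext h1
        exact ⟨by omega, by rw [← Fin.ext_iff]; exact h⟩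
      · exact ⟨by omega, h2⟩
  · rw [add_zero]
    congr 1
    ext x
    simp only [Finset.mem_filter, Finset.mem_univ, true_and]
    constructor
    · rintro ⟨h1, h2⟩
      refine ⟨?_, h2⟩
      by_contra hx
      obtain rfl : x = k := Fin.ext (by omega)
      exact h h2
    · rintro ⟨h1, h2⟩
      exact ⟨by omega, h2⟩

lemma colorCount_of_le {R K : ℕ} (g : Fin K → Fin R) {m : ℕ} (hm : K ≤ m) (r : Fin R) :
    colorCount g m r = colorCount g K r := by
  unfold colorCount
  congr 1
  ext x
  have := x.2
  simp only [Finset.mem_filter, Finset.mem_univ, true_and]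
  exact and_congr_left fun _ => ⟨fun _ => by omega, fun _ => by omega⟩

lemma sum_colorCount {R K : ℕ} (g : Fin K → Fin R) (m : ℕ) (hm : m ≤ K) :
    ∑ r, colorCount g m r = m := by
  induction m with
  | zero => simp [colorCount_zero]
  | succ m ih =>
    have h := fun r => colorCount_succ g ⟨m, hm⟩ r
    simp only at h
    simp [h, Finset.sum_add_distrib, ih (by omega)]

lemma coloring_injective {R K : ℕ} {g g' : Fin K → Fin R}
    (h : ∀ k : Fin K, ∀ r, colorCount g (k + 1) r = colorCount g' (k + 1) r) : g = g' := by
  have h0 : ∀ m ≤ K, ∀ r, colorCount g m r = colorCount g' m r := by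
    intro m hm r
    cases m with
    | zero => simp [colorCount_zero]
    | succ m => exact h ⟨m, hm⟩ r
  funext k
  have h1 := h k (g k)
  rw [colorCount_succ, colorCount_succ, h0 k k.2.le] at h1
  by_contra hne
  simp [Ne.symm hne] at h1

/-- A state dominating another one with one ball less exceeds it by a single ball. -/
lemma exists_added_ball {R : ℕ} (a b : Fin R → ℕ) (hab : ∀ r, a r ≤ b r)
    (hs : ∑ r, b r = ∑ r, a r + 1) : ∃ s, ∀ r, b r = a r + if s = r then 1 else 0 := by
  have hlt : ∃ s, a s < b s := by
    by_contra! hc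
    have := Finset.sum_le_sum (s := Finset.univ) fun r _ => hc r
    omega
  obtain ⟨s, hs'⟩ := hlt
  refine ⟨s, ?_⟩
  have hle : ∀ r ∈ Finset.univ, (a r + if s = r then 1 else 0) ≤ b r := by
    intro r _
    have := hab r
    split_ifs with h
    · subst h; omega
    · omega
  have := (Finset.sum_eq_sum_iff_of_le hle).1 (by simp [Finset.sum_add_distrib, hs])
  exact fun r => (this r (Finset.mem_univ r)).symm

lemma exists_coloring {R K : ℕ} (q : Fin K → Fin R → ℕ)
    (hsum : ∀ k : Fin K, ∑ r, q k r = (k : ℕ) + 1)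
    (hmono : ∀ k l : Fin K, (l : ℕ) = (k : ℕ) + 1 → ∀ r, q k r ≤ q l r) :
    ∃ g : Fin K → Fin R, ∀ k : Fin K, ∀ r, colorCount g (k + 1) r = q k r := by
  -- `P m` is the state at level `m`, extended by the empty bucket at level `0`.
  let P : ℕ → Fin R → ℕ := fun m r => if h : 0 < m ∧ m - 1 < K then q ⟨m - 1, h.2⟩ r else 0
  have hP0 : ∀ r, P 0 r = 0 := fun r => by simp [P]
  have hPs : ∀ k : Fin K, ∀ r, P (k + 1) r = q k r := fun k r => by simp [P]
  have hstep : ∀ k : Fin K, ∃ s, ∀ r, P (k + 1) r = P k r + if s = r then 1 else 0 := by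
    rintro ⟨k, hk⟩
    apply exists_added_ball
    · intro r
      cases k with
      | zero => simp [hP0]
      | succ k =>
        have h1 := hPs ⟨k, by omega⟩ r
        have h2 := hPs ⟨k + 1, hk⟩ r
        simp only at h1 h2 ⊢
        rw [h1, h2]
        exact hmono _ _ rfl r
    · have h2 := hPs ⟨k, hk⟩
      simp only at h2 ⊢
      simp only [h2, hsum]
      cases k with
      | zero => simp [hP0]
      | succ k =>
        have h1 := hPs ⟨k, by omega⟩
        simp only at h1
        simp [h1, hsum]
  choose g hg using hstep
  refine ⟨g, ?_⟩
  have key : ∀ m ≤ K, ∀ r, colorCount g m r = P m r := by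
    intro m
    induction m with
    | zero => intro _ r; rw [colorCount_zero, hP0]
    | succ m ih =>
      intro hm r
      have h1 := colorCount_succ g ⟨m, hm⟩ r
      have h2 := hg ⟨m, hm⟩ r
      simp only at h1 h2
      rw [h1, h2, ih (by omega)]
  intro k r
  rw [key _ k.2, hPs]

/-- The monomial of a coloring, with the exponents of the entries `Z r (d j)` collected. -/
lemma prod_coloring {R M K : ℕ} (Z : Fin R → Fin M → ℝ) (d : ℕ → Fin M) (g : Fin K → Fin R) :
    ∏ k : Fin K, ∏ j ∈ Finset.Icc 1 (K + K - k), Z (g k) (d j)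
      = ∏ r, ∏ j ∈ Finset.Icc 1 (K + K), Z r (d j) ^ colorCount g (K + K - j + 1) r := by
  have h : ∀ r j, Z r (d j) ^ colorCount g (K + K - j + 1) r
      = ∏ k : Fin K, if g k = r then (if (k : ℕ) < K + K - j + 1 then Z r (d j) else 1) else 1 := by
    intro r j
    rw [colorCount, ← Finset.prod_const, Finset.prod_filter]
    refine Finset.prod_congr rfl fun k _ => ?_
    by_cases h1 : g k = r <;> simp [h1]
  simp only [h]
  rw [Finset.prod_comm]
  simp_rw [Finset.prod_comm (s := (Finset.univ : Finset (Fin R)))]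
  simp only [Finset.prod_ite_eq, Finset.mem_univ, if_true]
  rw [Finset.prod_comm]
  refine Finset.prod_congr rfl fun k _ => ?_
  rw [← Finset.prod_filter]
  refine Finset.prod_congr ?_ fun _ _ => rfl
  ext j
  have := k.2
  simp only [Finset.mem_Icc, Finset.mem_filter]
  omega

/-- For `Z ∈ ℝ^{R̄×M}` and the order-`T` tensor
`A_{d_1,…,d_T} = ∏_{t=T/2+1}^{T} ∑_{r=1}^{R̄} ∏_{j=1}^{t} Z_{r d_j}`, the tensor decomposes
as a sum over bucket states `p ∈ P_{R̄,T/2}` and trajectories emptying the bucket. -/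
theorem tensor_bucket_decomposition (Rb M T : ℕ) (hR : 0 < Rb) (hM : 0 < M)
    (hT : 0 < T) (hTeven : Even T)
    (Z : Fin Rb → Fin M → ℝ) (d : ℕ → Fin M) :
    ∏ t ∈ Finset.Icc (T / 2 + 1) T, ∑ r : Fin Rb, ∏ j ∈ Finset.Icc 1 t, Z r (d j)
      = ∑ p ∈ stateSet Rb (T / 2), ∑ q ∈ chainSet Rb (T / 2) p,
          ∏ r : Fin Rb,
            (∏ j ∈ Finset.Icc 1 (T / 2), Z r (d j) ^ p r) *
            (∏ j ∈ Finset.Icc (T / 2 + 1) T, Z r (d j) ^ pad q (T - j + 1) r) := by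
  obtain ⟨K, rfl⟩ := hTeven
  have hK : (K + K) / 2 = K := by omega
  have hKpos : 0 < K := by omega
  rw [hK]
  have hre : ∏ t ∈ Finset.Icc (K + 1) (K + K), ∑ r : Fin Rb, ∏ j ∈ Finset.Icc 1 t, Z r (d j)
      = ∏ k : Fin K, ∑ r : Fin Rb, ∏ j ∈ Finset.Icc 1 (K + K - k), Z r (d j) := by
    symm
    refine Finset.prod_bij (fun k _ => K + K - (k : ℕ)) ?_ ?_ ?_ ?_
    · intro k _
      have := k.2
      simp only [Finset.mem_Icc]
      omega
    · intro k _ l _ h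
      have := k.2
      have := l.2
      exact Fin.ext (by omega)
    · intro t ht
      simp only [Finset.mem_Icc] at ht
      exact ⟨⟨K + K - t, by omega⟩, Finset.mem_univ _, by simp only; omega⟩
    · intro k _
      rfl
  rw [hre, Finset.prod_univ_sum, Finset.sum_sigma']
  have hbound : ∀ (m : ℕ), m ≤ K → ∀ (g : Fin K → Fin Rb) r, colorCount g m r < K + 1 := by
    intro m hm g r
    have h1 := sum_colorCount g m hm
    have h2 := Finset.single_le_sum (f := colorCount g m) (fun _ _ => Nat.zero_le _)
      (Finset.mem_univ r)
    omega
  refine Finset.sum_bij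
    (fun g _ => ⟨colorCount g K, fun k => colorCount g (k + 1)⟩) ?_ ?_ ?_ ?_
  · intro g _
    simp only [Finset.mem_sigma, stateSet, chainSet, Finset.mem_filter, Fintype.mem_piFinset,
      Finset.mem_range]
    refine ⟨⟨fun r => hbound K le_rfl g r, sum_colorCount g K le_rfl⟩,
      fun k r => hbound _ k.2 g r, fun k => sum_colorCount g _ k.2, ?_, ?_⟩
    · intro k l hkl r
      rw [colorCount_succ g l, hkl]
      exact Nat.le_add_right _ _
    · intro k hk
      rw [hk, Nat.sub_add_cancel hKpos]
  · intro g _ g' _ h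
    simp only [Sigma.mk.injEq, heq_eq_eq] at h
    exact coloring_injective fun k r => congrFun (congrFun h.2 k) r
  · rintro ⟨p, q⟩ hpq
    simp only [Finset.mem_sigma, chainSet, Finset.mem_filter] at hpq
    obtain ⟨-, -, hsum, hmono, htop⟩ := hpq
    obtain ⟨g, hg⟩ := exists_coloring q hsum hmono
    refine ⟨g, by simp, ?_⟩
    have hq : (fun k : Fin K => colorCount g (k + 1)) = q := by
      funext k r
      exact hg k r
    have hp : colorCount g K = p := by
      rw [← htop ⟨K - 1, by omega⟩ rfl, ← hq]
      simp only [Nat.sub_add_cancel hKpos]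
    rw [hq, hp]
  · intro g _
    rw [prod_coloring]
    refine Finset.prod_congr rfl fun r _ => ?_
    have hsplit : Finset.Icc 1 (K + K) = Finset.Icc 1 K ∪ Finset.Icc (K + 1) (K + K) := by
      ext j
      simp only [Finset.mem_Icc, Finset.mem_union]
      omega
    have hdisj : Disjoint (Finset.Icc 1 K) (Finset.Icc (K + 1) (K + K)) := by
      rw [Finset.disjoint_left]
      intro j
      simp only [Finset.mem_Icc]
      omega
    rw [hsplit, Finset.prod_union hdisj]
    congr 1
    · refine Finset.prod_congr rfl fun j hj => ?_
      simp only [Finset.mem_Icc] at hj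
      rw [colorCount_of_le g (by omega)]
    · refine Finset.prod_congr rfl fun j hj => ?_
      simp only [Finset.mem_Icc] at hj
      have hlt : K + K - j < K := by omega
      simp only [pad, Nat.add_sub_cancel]
      rw [dif_pos hlt]
end

section
/- Let T be an even positive integer and R̄ a positive integer. For Ω ∈ ℝ, Ω > 0, for p^{(T/2)} ∈ P_{R̄,T/2} and d = (d_{T/2+1},...,d_T) ∈ [R̄]^{T/2} with d_j ≤ d_{j+1} for all j, define f(d, p^{(T/2)}) = max over trajectories (p^{(T/2−1)},...,p^{(1)}) ∈ T(p^{(T/2)}) of ∑_{j=T/2+1}^{T} Ω^{d_j} · p^{(T−j+1)}_{d_j}. Then there exists Ω > 0 such that for every such nondecreasing d, the maximum of f(d, p^{(T/2)}) over all p^{(T/2)} ∈ P_{R̄,T/2} is attained uniquely (strictly) at p̂^{(T/2)} defined by p̂^{(T/2)}_r = |{j ∈ {T/2+1,...,T} : d_j = r}| for each r ∈ [R̄]. -/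
/-- `f(d, p)`: the maximal accumulated reward `∑_{j=T/2+1}^{T} Ω^{d_j} ⬝ p^{(T-j+1)}_{d_j}`
over all trajectories in `T(p)` (chains in `chainSet` with top state `p`). -/
noncomputable def fval (Rb T : ℕ) (Ω : ℝ) (d : ℕ → Fin Rb) (p : Fin Rb → ℕ) : ℝ :=
  sSup ((fun q : Fin (T / 2) → Fin Rb → ℕ =>
      ∑ j ∈ Finset.Icc (T / 2 + 1) T,
        Ω ^ ((d j : ℕ) + 1) * (pad q (T - j + 1) (d j) : ℝ))
    '' ↑(chainSet Rb (T / 2) p))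

/-- The state after the first `m` letters of the word `b`: the number of balls of each color. -/
def wordState {R : ℕ} (b : ℕ → Fin R) (m : ℕ) (r : Fin R) : ℕ :=
  ((Finset.range m).filter fun i => b i = r).card

/-- The reward of the word `b` against the reversed color sequence `e`. -/
noncomputable def reward {R : ℕ} (N : ℕ) (Ω : ℝ) (e b : ℕ → Fin R) : ℝ :=
  ∑ m ∈ Finset.range N, Ω ^ ((e m : ℕ) + 1) * (wordState b (m + 1) (e m) : ℝ)

/-- The total contribution of a ball of color `c` added at step `i`. -/
noncomputable def weight {R : ℕ} (N : ℕ) (Ω : ℝ) (e : ℕ → Fin R) (i : ℕ) (c : Fin R) : ℝ :=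
  ∑ m ∈ Finset.range N, if i ≤ m ∧ c = e m then Ω ^ ((e m : ℕ) + 1) else 0

lemma wordState_succ {R : ℕ} (b : ℕ → Fin R) (m : ℕ) (r : Fin R) :
    wordState b (m + 1) r = wordState b m r + if b m = r then 1 else 0 := by
  unfold wordState
  rw [Finset.range_add_one, Finset.filter_insert]
  split_ifs with h
  · rw [Finset.card_insert_of_notMem (by simp)]
  · simp

lemma sum_wordState {R : ℕ} (b : ℕ → Fin R) (m : ℕ) : ∑ r, wordState b m r = m := by
  unfold wordState
  rw [← Finset.card_eq_sum_card_fiberwise (fun _ _ => Finset.mem_coe.2 (Finset.mem_univ _)),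
    Finset.card_range]

lemma wordState_congr {R : ℕ} {b c : ℕ → Fin R} {m : ℕ} (h : ∀ i < m, b i = c i) :
    wordState b m = wordState c m := by
  funext r
  unfold wordState
  congr 1
  apply Finset.filter_congr
  intro i hi
  rw [h i (Finset.mem_range.1 hi)]

/-- Adding one to the total of a state increases exactly one coordinate, by one. -/
lemma exists_step {R : ℕ} (u v : Fin R → ℕ) (huv : ∀ r, u r ≤ v r)
    (hs : ∑ r, v r = ∑ r, u r + 1) :
    ∃ b, ∀ r, v r = u r + if b = r then 1 else 0 := by
  obtain ⟨b, -, hb⟩ : ∃ b ∈ Finset.univ, u b < v b :=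
    Finset.exists_lt_of_sum_lt (by omega)
  refine ⟨b, ?_⟩
  have hle : ∀ r ∈ Finset.univ, (u r + if b = r then 1 else 0) ≤ v r := by
    intro r _
    split_ifs with h
    · subst h; omega
    · simpa using huv r
  have hsum : ∑ r, (u r + if b = r then 1 else 0) = ∑ r, v r := by
    rw [Finset.sum_add_distrib, hs]
    simp
  intro r
  exact ((Finset.sum_eq_sum_iff_of_le hle).1 hsum r (Finset.mem_univ r)).symm

/-- Every chain of states with totals `0, 1, …, N` is the chain of states of some word. -/
lemma exists_word {R : ℕ} (hR : 0 < R) (N : ℕ) (Q : ℕ → Fin R → ℕ)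
    (hs : ∀ k ≤ N, ∑ r, Q k r = k) (hmono : ∀ k < N, ∀ r, Q k r ≤ Q (k + 1) r) :
    ∃ b : ℕ → Fin R, ∀ k ≤ N, Q k = wordState b k := by
  have hstep : ∀ k, ∃ b : Fin R, k < N → ∀ r, Q (k + 1) r = Q k r + if b = r then 1 else 0 := by
    intro k
    by_cases hk : k < N
    · obtain ⟨b, hb⟩ := exists_step (Q k) (Q (k + 1)) (hmono k hk)
        (by rw [hs k hk.le, hs (k + 1) hk])
      exact ⟨b, fun _ => hb⟩
    · exact ⟨⟨0, hR⟩, fun h => absurd h hk⟩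
  choose b hb using hstep
  refine ⟨b, fun k => ?_⟩
  induction k with
  | zero =>
    intro _
    funext r
    have h0 := hs 0 (Nat.zero_le _)
    have := (Finset.sum_eq_zero_iff.1 h0) r (Finset.mem_univ r)
    simp [wordState, this]
  | succ k ih =>
    intro hk
    funext r
    rw [hb k hk r, wordState_succ, ih (by omega)]

lemma reward_eq_sum_weight {R : ℕ} (N : ℕ) (Ω : ℝ) (e b : ℕ → Fin R) :
    reward N Ω e b = ∑ i ∈ Finset.range N, weight N Ω e i (b i) := by
  unfold reward weight
  rw [Finset.sum_comm]
  refine Finset.sum_congr rfl fun m hm => ?_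
  have hm := Finset.mem_range.1 hm
  have hset : ((Finset.range (m + 1)).filter fun i => b i = e m)
      = (Finset.range N).filter fun i => i ≤ m ∧ b i = e m := by
    ext i
    simp only [Finset.mem_filter, Finset.mem_range]
    constructor
    · rintro ⟨h1, h2⟩; exact ⟨by omega, by omega, h2⟩
    · rintro ⟨_, h1, h2⟩; exact ⟨by omega, h2⟩
  rw [wordState, hset, ← Finset.sum_filter, Finset.sum_const, nsmul_eq_mul, mul_comm]

/-- At step `i` the color `e i`, the largest one still to be rewarded, strictly beats the others
when `Ω = N + 1`. -/
lemma weight_lt {R : ℕ} (N : ℕ) (e : ℕ → Fin R)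
    (he : ∀ i m, i ≤ m → m < N → e m ≤ e i) (i : ℕ) (hi : i < N) (c : Fin R) (hc : c ≠ e i) :
    weight N ((N : ℝ) + 1) e i c < weight N ((N : ℝ) + 1) e i (e i) := by
  have hN : (0 : ℝ) ≤ N := Nat.cast_nonneg N
  set Ω : ℝ := (N : ℝ) + 1 with hΩ
  have h1 : (1 : ℝ) ≤ Ω := by linarith
  have hpos : ∀ n : ℕ, 0 < Ω ^ n := fun n => pow_pos (by linarith) n
  have hup : weight N Ω e i c ≤ N * Ω ^ (e i : ℕ) := by
    have := Finset.sum_le_card_nsmul (Finset.range N)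
      (fun m => if i ≤ m ∧ c = e m then Ω ^ ((e m : ℕ) + 1) else 0) (Ω ^ (e i : ℕ)) (by
        intro m hm
        have hm := Finset.mem_range.1 hm
        split_ifs with h
        · apply pow_le_pow_right₀ h1
          have hle := he i m h.1 hm
          have hne : e m ≠ e i := h.2 ▸ hc
          exact lt_of_le_of_ne hle hne
        · exact (hpos _).le)
    simpa [weight] using this
  have hlow : Ω ^ ((e i : ℕ) + 1) ≤ weight N Ω e i (e i) := by
    have := Finset.single_le_sum
      (f := fun m => if i ≤ m ∧ e i = e m then Ω ^ ((e m : ℕ) + 1) else 0)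
      (s := Finset.range N) (fun m _ => by
        split_ifs
        · exact (hpos _).le
        · exact le_rfl) (Finset.mem_range.2 hi)
    simpa [weight] using this
  have hp := hpos (e i : ℕ)
  rw [pow_succ] at hlow
  nlinarith

lemma reward_lt {R : ℕ} (N : ℕ) (e : ℕ → Fin R)
    (he : ∀ i m, i ≤ m → m < N → e m ≤ e i) (b : ℕ → Fin R)
    (hb : wordState b N ≠ wordState e N) :
    reward N ((N : ℝ) + 1) e b < reward N ((N : ℝ) + 1) e e := by
  rw [reward_eq_sum_weight, reward_eq_sum_weight]
  obtain ⟨i, hi, hne⟩ : ∃ i < N, b i ≠ e i := by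
    by_contra! h
    exact hb (wordState_congr h)
  refine Finset.sum_lt_sum (fun k hk => ?_) ⟨i, Finset.mem_range.2 hi, weight_lt N e he i hi _ hne⟩
  by_cases h : b k = e k
  · rw [h]
  · exact (weight_lt N e he k (Finset.mem_range.1 hk) _ h).le

/-- The substitution `j = T - k` in the objective. -/
lemma sum_Icc_eq {R : ℕ} (N : ℕ) (Ω : ℝ) (d : ℕ → Fin R) (q : Fin N → Fin R → ℕ)
    (b : ℕ → Fin R) (hq : ∀ k : Fin N, q k = wordState b (k + 1)) :
    ∑ j ∈ Finset.Icc (N + 1) (2 * N),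
        Ω ^ ((d j : ℕ) + 1) * (pad q (2 * N - j + 1) (d j) : ℝ)
      = reward N Ω (fun k => d (2 * N - k)) b := by
  unfold reward
  refine Finset.sum_nbij' (fun j => 2 * N - j) (fun k => 2 * N - k) ?_ ?_ ?_ ?_ ?_
  · intro j hj; simp only [Finset.mem_Icc, Finset.mem_range] at *; omega
  · intro j hj; simp only [Finset.mem_Icc, Finset.mem_range] at *; omega
  · intro j hj; simp only [Finset.mem_Icc] at *; omega
  · intro j hj; simp only [Finset.mem_range] at *; omega
  · intro j hj
    simp only [Finset.mem_Icc] at hj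
    have h1 : 2 * N - j < N := by omega
    have h2 : 2 * N - (2 * N - j) = j := by omega
    simp only [pad, h1, dite_true, hq, h2, Nat.add_sub_cancel]

lemma count_eq_wordState {R : ℕ} (N : ℕ) (d : ℕ → Fin R) :
    (fun r : Fin R => ((Finset.Icc (N + 1) (2 * N)).filter fun j => d j = r).card)
      = wordState (fun k => d (2 * N - k)) N := by
  funext r
  unfold wordState
  refine Finset.card_nbij' (fun j => 2 * N - j) (fun k => 2 * N - k) ?_ ?_ ?_ ?_
  · intro j hj
    simp only [Finset.coe_filter, Finset.mem_Icc, Finset.mem_range, Set.mem_ofPred_eq] at *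
    have h2 : 2 * N - (2 * N - j) = j := by omega
    rw [h2]
    exact ⟨by omega, hj.2⟩
  · intro j hj
    simp only [Finset.coe_filter, Finset.mem_Icc, Finset.mem_range, Set.mem_ofPred_eq] at *
    exact ⟨by omega, hj.2⟩
  · intro j hj
    simp only [Finset.coe_filter, Finset.mem_Icc, Set.mem_ofPred_eq] at *
    omega
  · intro j hj
    simp only [Finset.coe_filter, Finset.mem_range, Set.mem_ofPred_eq] at *
    omega

lemma wordState_le {R : ℕ} (b : ℕ → Fin R) (m : ℕ) (r : Fin R) : wordState b m r ≤ m := by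
  simpa [wordState] using Finset.card_filter_le (Finset.range m) fun i => b i = r

lemma word_mem_chainSet {R : ℕ} (N : ℕ) (b : ℕ → Fin R) :
    (fun k : Fin N => wordState b (k + 1)) ∈ chainSet R N (wordState b N) := by
  simp only [chainSet, Finset.mem_filter, Fintype.mem_piFinset, Finset.mem_range]
  refine ⟨fun k r => ?_, fun k => sum_wordState b _, fun k l hkl r => ?_, fun k hk => ?_⟩
  · have := wordState_le b (k + 1) r
    have := k.2
    omega
  · rw [hkl, wordState_succ b (k + 1)]
    exact Nat.le_add_right _ _
  · have h : (k : ℕ) + 1 = N := by have := k.2; omega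
    rw [h]

lemma exists_word_of_mem_chainSet {R : ℕ} (hR : 0 < R) (N : ℕ) (hN : 0 < N) (p : Fin R → ℕ)
    (q : Fin N → Fin R → ℕ) (hq : q ∈ chainSet R N p) :
    ∃ b : ℕ → Fin R, (∀ k : Fin N, q k = wordState b (k + 1)) ∧ p = wordState b N := by
  simp only [chainSet, Finset.mem_filter] at hq
  obtain ⟨-, hs, hm, ht⟩ := hq
  -- The chain extended by the zero state at level `0`.
  let Q : ℕ → Fin R → ℕ := fun k r =>
    if h : k - 1 < N then (if k = 0 then 0 else q ⟨k - 1, h⟩ r) else 0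
  have hQ0 : ∀ r, Q 0 r = 0 := by intro r; simp [Q]
  have hQ : ∀ k (h : k < N), Q (k + 1) = q ⟨k, h⟩ := by
    intro k h; funext r; simp [Q, h]
  obtain ⟨b, hb⟩ := exists_word hR N Q (by
      intro k hk
      cases k with
      | zero => simp [hQ0]
      | succ k => rw [hQ k hk, hs])
    (by
      intro k hk r
      cases k with
      | zero => simp [hQ0]
      | succ k =>
        rw [hQ k (by omega), hQ (k + 1) hk]
        exact hm _ _ rfl r)
  have hqb : ∀ k : Fin N, q k = wordState b (k + 1) := fun k => by
    rw [← hb (k + 1) k.2, hQ k k.2]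
  refine ⟨b, hqb, ?_⟩
  have := ht ⟨N - 1, by omega⟩ rfl
  rw [← this, hqb]
  simp only [Nat.sub_add_cancel hN]

/-- There exists `Ω > 0` such that for every nondecreasing color sequence
`d = (d_{T/2+1},…,d_T)`, the maximum of `f(d, ·)` over `P_{R̄,T/2}` is strictly and uniquely
attained at the state `p̂` counting the occurrences of each color in `d`. -/
theorem optimal_bucket_state_unique (T Rb : ℕ) (hT : 0 < T) (hTeven : Even T)
    (hRb : 0 < Rb) :
    ∃ Ω : ℝ, 0 < Ω ∧
      ∀ d : ℕ → Fin Rb,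
        (∀ j : ℕ, T / 2 + 1 ≤ j → j + 1 ≤ T → d j ≤ d (j + 1)) →
        (fun r : Fin Rb => ((Finset.Icc (T / 2 + 1) T).filter fun j => d j = r).card)
            ∈ stateSet Rb (T / 2) ∧
        ∀ p ∈ stateSet Rb (T / 2),
          p ≠ (fun r : Fin Rb => ((Finset.Icc (T / 2 + 1) T).filter fun j => d j = r).card) →
          fval Rb T Ω d p <
            fval Rb T Ω d
              (fun r : Fin Rb => ((Finset.Icc (T / 2 + 1) T).filter fun j => d j = r).card) := by
  obtain ⟨N, hN⟩ := hTeven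
  obtain rfl : T = 2 * N := by omega
  have hN0 : 0 < N := by omega
  have hdiv : 2 * N / 2 = N := by omega
  refine ⟨(N : ℝ) + 1, by positivity, fun d hd => ?_⟩
  unfold fval
  rw [hdiv] at hd ⊢
  rw [count_eq_wordState]
  set e : ℕ → Fin Rb := fun k => d (2 * N - k) with he
  have hanti : ∀ i m, i ≤ m → m < N → e m ≤ e i := by
    intro i m him
    induction m, him using Nat.le_induction with
    | base => exact fun _ => le_rfl
    | succ m him ih =>
      intro hm
      refine le_trans ?_ (ih (by omega))
      have := hd (2 * N - (m + 1)) (by omega) (by omega)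
      rwa [show 2 * N - (m + 1) + 1 = 2 * N - m by omega] at this
  refine ⟨?_, fun p _ hpne => ?_⟩
  · simp only [stateSet, Finset.mem_filter, Fintype.mem_piFinset, Finset.mem_range]
    exact ⟨fun r => Nat.lt_succ_of_le (wordState_le e N r), sum_wordState e N⟩
  have hpos : 0 < reward N ((N : ℝ) + 1) e e := by
    refine Finset.sum_pos (fun m _ => ?_) ⟨0, Finset.mem_range.2 hN0⟩
    have : 0 < wordState e (m + 1) (e m) := by
      rw [wordState_succ]
      simp
    positivity
  refine lt_of_lt_of_le ?_ (le_csSup ((Finset.finite_toSet _).image _).bddAbove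
    ⟨_, word_mem_chainSet N e, sum_Icc_eq N _ d _ e fun _ => rfl⟩)
  rcases Set.eq_empty_or_nonempty (chainSet Rb N p : Set (Fin N → Fin Rb → ℕ)) with h | h
  · rw [h, Set.image_empty, Real.sSup_empty]
    exact hpos
  -- The supremum over a nonempty finite set of chains is attained at some chain `q`.
  · obtain ⟨q, hq, hqeq⟩ := (h.image (fun q : Fin N → Fin Rb → ℕ =>
      ∑ j ∈ Finset.Icc (N + 1) (2 * N),
        ((N : ℝ) + 1) ^ ((d j : ℕ) + 1) * (pad q (2 * N - j + 1) (d j) : ℝ))).csSup_mem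
      ((Finset.finite_toSet _).image _)
    rw [← hqeq]
    obtain ⟨b, hb, hpb⟩ := exists_word_of_mem_chainSet hRb N hN0 p q hq
    dsimp only
    rw [sum_Icc_eq N _ d q b hb]
    exact reward_lt N e hanti b (hpb ▸ hpne)
end

section
/- Consider a depth L=2 RAC with R hidden channels per layer, encoding f : X → ℝ^M, and the following weight assignment: W^{H,1} = W^{H,2} = I (identity matrices), W^{I,2} ∈ ℝ^{R×R} with entries W^{I,2}_{ij} = δ_{i1}, output matrix W^O ∈ ℝ^{C×R} with W^O_{ij} = δ_{1j}, arbitrary W^{I,1} ∈ ℝ^{R×M}, and initial hidden states h^{0,1} = h^{0,2} = 1 (all-ones vectors). Then for every class c ∈ [C] and every input (x^1,...,x^T) ∈ X^T, the output after T time-steps equals y^{T,2,Θ}_c(x^1,...,x^T) = ∏_{t=1}^T ∑_{r=1}^R ∏_{j=1}^t (W^{I,1} f(x^j))_r. -/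
/-! Since `W^{H,1}` is the identity and `h^{0,1}` is all ones, channel `r` of layer 1 at time `t`
is the running product of the inputs `(W^{I,1} f(x^j))_r` for `j ≤ t`. The first row of `W^{I,2}` is
all ones, so the first channel of layer 2 is multiplied at each time-step by the sum of the layer-1
channels, and `W^O` reads off exactly this channel. Both identities follow by induction on time. -/

/-- Layer-1 hidden state of a depth-2 RAC (0-indexed inputs: the input at time-step `t+1`
is `x t`): `h^{0,1} = h01` and `h^{t+1,1} = (W^{H,1} h^{t,1}) ⊙ (W^{I,1} f(x^{t+1}))`. -/
noncomputable def hid1 {X : Type*} {M R : ℕ} (f : X → Fin M → ℝ)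
    (WI1 : Fin R → Fin M → ℝ) (WH1 : Fin R → Fin R → ℝ) (h01 : Fin R → ℝ)
    (x : ℕ → X) : ℕ → Fin R → ℝ
  | 0 => h01
  | t + 1 => fun β =>
      (∑ α, WH1 β α * hid1 f WI1 WH1 h01 x t α) * (∑ m, WI1 β m * f (x t) m)

/-- Layer-2 hidden state of a depth-2 RAC:
`h^{0,2} = h02` and `h^{t+1,2} = (W^{H,2} h^{t,2}) ⊙ (W^{I,2} h^{t+1,1})`. -/
noncomputable def hid2 {X : Type*} {M R : ℕ} (f : X → Fin M → ℝ)
    (WI1 : Fin R → Fin M → ℝ) (WH1 : Fin R → Fin R → ℝ) (h01 : Fin R → ℝ)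
    (WI2 WH2 : Fin R → Fin R → ℝ) (h02 : Fin R → ℝ) (x : ℕ → X) : ℕ → Fin R → ℝ
  | 0 => h02
  | t + 1 => fun β =>
      (∑ α, WH2 β α * hid2 f WI1 WH1 h01 WI2 WH2 h02 x t α) *
      (∑ α, WI2 β α * hid1 f WI1 WH1 h01 x (t + 1) α)

/-- For a depth `L = 2` RAC with `W^{H,1} = W^{H,2} = I`,
`W^{I,2}_{ij} = δ_{i1}`, `W^O_{ij} = δ_{1j}`, arbitrary `W^{I,1}`, and all-ones initial
hidden states, the output of class `c` after `T` time-steps equals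
`∏_{t=1}^T ∑_{r=1}^R ∏_{j=1}^t (W^{I,1} f(x^j))_r`. -/
theorem deep_rac_special_assignment_output {X : Type*} (T M R C : ℕ)
    (hT : 0 < T) (hR : 0 < R)
    (f : X → Fin M → ℝ) (WI1 : Fin R → Fin M → ℝ)
    (WH1 WH2 WI2 : Fin R → Fin R → ℝ) (WO : Fin C → Fin R → ℝ)
    (h01 h02 : Fin R → ℝ)
    (hWH1 : ∀ β α, WH1 β α = if β = α then 1 else 0)
    (hWH2 : ∀ β α, WH2 β α = if β = α then 1 else 0)
    (hWI2 : ∀ i j : Fin R, WI2 i j = if (i : ℕ) = 0 then 1 else 0)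
    (hWO : ∀ (i : Fin C) (j : Fin R), WO i j = if (j : ℕ) = 0 then 1 else 0)
    (hh01 : ∀ α, h01 α = 1) (hh02 : ∀ α, h02 α = 1)
    (c : Fin C) (x : ℕ → X) :
    ∑ α, WO c α * hid2 f WI1 WH1 h01 WI2 WH2 h02 x T α
      = ∏ t ∈ Finset.range T, ∑ r : Fin R,
          ∏ j ∈ Finset.range (t + 1), ∑ m, WI1 r m * f (x j) m := by
  have h1 : ∀ t r, hid1 f WI1 WH1 h01 x t r
      = ∏ j ∈ Finset.range t, ∑ m, WI1 r m * f (x j) m := by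
    intro t
    induction t with
    | zero => intro r; simp [hid1, hh01]
    | succ t ih => intro r; simp [hid1, hWH1, ih, Finset.prod_range_succ]
  -- Only the first channel survives `W^O`; the others vanish after one step.
  have h2 : ∀ t, hid2 f WI1 WH1 h01 WI2 WH2 h02 x t ⟨0, hR⟩
      = ∏ s ∈ Finset.range t, ∑ r : Fin R,
          ∏ j ∈ Finset.range (s + 1), ∑ m, WI1 r m * f (x j) m := by
    intro t
    induction t with
    | zero => simp [hid2, hh02]
    | succ t ih =>
      rw [Finset.prod_range_succ, ← ih]
      simp only [hid2, hWH2, hWI2, h1, ite_mul, one_mul, zero_mul, Finset.sum_ite_eq,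
        Finset.mem_univ, if_true]
  rw [← h2, Finset.sum_eq_single ⟨0, hR⟩]
  · simp [hWO]
  · intro b _ hb
    have hb' : (b : ℕ) ≠ 0 := fun h => hb (Fin.ext h)
    simp [hWO, hb']
  · simp
end

section
/- Let T be an even positive integer, let R̄, M be positive integers with R̄ ≤ M, let z ∈ ℝ \ {0}, Ω a positive integer, and let Z ∈ ℝ^{R̄×M} have entries Z_{rd} = z^{Ω^r} if r = d and Z_{rd} = 1 if r ≠ d, d ≤ M (i.e. Z_{rd} = z^{Ω^r δ_{rd}}). Define the order-T tensor B̃ by B̃_{d_1,...,d_T} = ∏_{t=T/2+1}^{T} ∑_{r=1}^{R̄} ∏_{j=1}^{t} Z_{r d_j}, for d_1,...,d_T ∈ [M], and let B = [B̃]_{S,E} be its M^{T/2} × M^{T/2} Start-End matricization. Then there exist a positive integer Ω and a value z ∈ ℝ such that rank(B) = multiset(R̄, T/2) = binom(R̄ + T/2 − 1, T/2). -/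
/-!
Write `N = T/2`, `w r = Ω ^ (r + 1)`, and for tuples `u, v` let `n_r(u)` be the number of occurrences
of `r` in `u` and `n_r^k(v)` the number of occurrences of `r` among `v_0, …, v_k`. The entry of the
matricization at `(u, v)` is `∏_k ∑_r z ^ (w r * n_r(u)) * z ^ (w r * n_r^k(v))`. Expanding the product
over words `ρ : Fin N → Fin Rb` and collecting words with the same multiset of letters gives a
factorization `B = A * C` through `Sym (Fin Rb) N`, whose cardinality is the claimed rank
(`entry_eq_sum`). This is the upper bound.

For the lower bound, restrict rows and columns to the nondecreasing words `v_q`, one for each multiset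
`q`. It suffices that both square factors are invertible for large `z`, and each of them tends to the
identity matrix after rescaling rows and columns by powers of `z` (`eventually_det_ne_zero`):

* the first factor is `z ^ ⟪q, p⟫` with `⟪q, p⟫ = ∑_r w r * n_r(q) * n_r(p)`, and
  `2 ⟪q, p⟫ < ⟪q, q⟫ + ⟪p, p⟫` for `p ≠ q` (`two_mul_pairing_lt`; half-exponents are avoided by
  taking `z = y ^ 2`);
* in the second factor the exponent `∑_k w (ρ k) * n_{ρ k}^k(v_q)` of a word `ρ` is maximized, position
  by position, only by `ρ = v_q` (`wordExp_lt`): letters above `v_q k` have not occurred up to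
  position `k` since `v_q` is nondecreasing, and letters below it are outweighed since `Ω > N`.
-/

/-- Concatenate two half index tuples of length `T/2` into a 1-indexed sequence of indices:
`j ∈ {1,…,T/2}` reads the row tuple and `j ∈ {T/2+1,…,T}` reads the column tuple. -/
def join1 {M T : ℕ} (hT2 : 0 < T / 2) (u v : Fin (T / 2) → Fin M) : ℕ → Fin M :=
  fun j =>
    if h : j - 1 < T / 2 then u ⟨j - 1, h⟩
    else v ⟨(j - 1 - T / 2) % (T / 2), Nat.mod_lt _ hT2⟩

open Filter Topology

namespace DeepRac

/-- Number of positions of the word `u` carrying the letter `r`; letters are compared as naturals,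
since `r` and the letters of `u` may range over different `Fin` types. -/
def occ {N m R : ℕ} (u : Fin N → Fin m) (r : Fin R) : ℕ :=
  (Finset.univ.filter fun i => (r : ℕ) = (u i : ℕ)).card

/-- Number of positions `i ≤ k` of the word `v` carrying the letter `r`. -/
def occUpTo {N m R : ℕ} (v : Fin N → Fin m) (k : Fin N) (r : Fin R) : ℕ :=
  (Finset.univ.filter fun i => i ≤ k ∧ (r : ℕ) = (v i : ℕ)).card

/-- The multiset of letters of a word. -/
def content {N R : ℕ} (ρ : Fin N → Fin R) : Sym (Fin R) N :=
  ⟨Finset.univ.val.map ρ, by simp⟩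

/-- The exponent of `z` contributed by the word `ρ` against the column tuple `v`. -/
def wordExp {N m R : ℕ} (w : Fin R → ℕ) (v : Fin N → Fin m) (ρ : Fin N → Fin R) : ℕ :=
  ∑ k, w (ρ k) * occUpTo v k (ρ k)

/-- The exponent of `z` contributed by a multiset `p` of letters against the row tuple `u`. -/
def rowExp {N m R : ℕ} (w : Fin R → ℕ) (u : Fin N → Fin m) (p : Sym (Fin R) N) : ℕ :=
  ((p : Multiset (Fin R)).map fun r => w r * occ u r).sum

/-- The weighted inner product of the multiplicity vectors of two multisets. -/
def pairing {N R : ℕ} (w : Fin R → ℕ) (q p : Sym (Fin R) N) : ℕ :=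
  ∑ r, w r * (q : Multiset (Fin R)).count r * (p : Multiset (Fin R)).count r

/-- The row factor of the matricization. -/
def rowFactor (N m : ℕ) {R : ℕ} (w : Fin R → ℕ) (z : ℝ) :
    Matrix (Fin N → Fin m) (Sym (Fin R) N) ℝ :=
  Matrix.of fun u p => z ^ rowExp w u p

/-- The column factor of the matricization. -/
def colFactor (N m : ℕ) {R : ℕ} (w : Fin R → ℕ) (z : ℝ) :
    Matrix (Sym (Fin R) N) (Fin N → Fin m) ℝ :=
  Matrix.of fun p v => ∑ ρ : Fin N → Fin R, if content ρ = p then z ^ wordExp w v ρ else 0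

/-! ### Exponents of the two factors -/

lemma coe_content {N R : ℕ} (ρ : Fin N → Fin R) :
    (content ρ : Multiset (Fin R)) = Finset.univ.val.map ρ := rfl

lemma exists_monotone_content {N R : ℕ} (q : Sym (Fin R) N) :
    ∃ ρ : Fin N → Fin R, Monotone ρ ∧ content ρ = q := by
  obtain ⟨s, rfl⟩ := q
  have hl : (s.sort (· ≤ ·)).length = s.card := Multiset.length_sort ..
  refine ⟨fun i => (s.sort (· ≤ ·)).get (Fin.cast hl.symm i), ?_, ?_⟩
  · have h : (s.sort (· ≤ ·)).SortedLE := (Multiset.pairwise_sort s (· ≤ ·)).sortedLE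
    intro i j hij
    exact h.monotone_get (by simpa using hij)
  · apply Subtype.ext
    change ((content _ : Sym (Fin R) _) : Multiset (Fin R)) = s
    rw [coe_content, Fin.univ_val_map]
    conv_rhs => rw [← Multiset.sort_eq s (· ≤ ·)]
    congr 1
    apply List.ext_get
    · simp
    · intro n h1 h2
      simp

lemma occ_eq_count {N m R : ℕ} (h : R ≤ m) (ρ : Fin N → Fin R) (r : Fin R) :
    occ (fun i => Fin.castLE h (ρ i)) r = ((content ρ : Sym (Fin R) N) : Multiset (Fin R)).count r := by
  rw [coe_content, Multiset.count_map]
  simp only [occ, Fin.val_castLE, Fin.val_inj]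
  rfl

lemma rowExp_eq_pairing {N m R : ℕ} (h : R ≤ m) (w : Fin R → ℕ) (ρ : Fin N → Fin R)
    (p : Sym (Fin R) N) :
    rowExp w (fun i => Fin.castLE h (ρ i)) p = pairing w (content ρ) p := by
  unfold rowExp pairing
  rw [Finset.sum_multiset_map_count]
  simp only [occ_eq_count, smul_eq_mul]
  rw [Finset.sum_subset (Finset.subset_univ _)]
  · exact Finset.sum_congr rfl fun r _ => by ring
  · intro r _ hr
    rw [Multiset.count_eq_zero.2 fun hm => hr (Multiset.mem_toFinset.2 hm)]
    simp

lemma two_mul_pairing_lt {N R : ℕ} {w : Fin R → ℕ} (hw : ∀ r, 0 < w r) {q p : Sym (Fin R) N}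
    (hpq : q ≠ p) : 2 * pairing w q p < pairing w q q + pairing w p p := by
  unfold pairing
  rw [Finset.mul_sum, ← Finset.sum_add_distrib]
  have key : ∀ W a b : ℕ, 2 * (W * a * b) ≤ W * a * a + W * b * b := fun W a b => by
    zify; nlinarith [mul_nonneg (Int.natCast_nonneg W) (sq_nonneg ((a : ℤ) - b))]
  have key' : ∀ W a b : ℕ, 0 < W → a ≠ b → 2 * (W * a * b) < W * a * a + W * b * b :=
    fun W a b hW hab => by
      have h2 : (0 : ℤ) < ((a : ℤ) - b) ^ 2 := by
        have : (a : ℤ) - b ≠ 0 := sub_ne_zero.2 (by exact_mod_cast hab)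
        positivity
      have hW' : (0 : ℤ) < W := by exact_mod_cast hW
      zify; nlinarith [mul_pos hW' h2]
  refine Finset.sum_lt_sum (fun r _ => key _ _ _) ?_
  by_contra! hcon
  apply hpq
  apply Subtype.ext
  refine Multiset.ext.2 fun r => ?_
  by_contra hne
  exact absurd (key' (w r) _ _ (hw r) hne) (not_lt.2 (hcon r (Finset.mem_univ r)))

/-- Position by position, a nondecreasing word is the unique best response to itself when each
weight exceeds `N` times every smaller one. -/
lemma weight_occUpTo_lt {N m R : ℕ} (h : R ≤ m) {w : Fin R → ℕ} (hw : ∀ r, 0 < w r)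
    (hw' : ∀ s r, s < r → w s * N < w r) {v : Fin N → Fin R} (hv : Monotone v) (k : Fin N)
    {s : Fin R} (hs : s ≠ v k) :
    w s * occUpTo (fun i => Fin.castLE h (v i)) k s <
      w (v k) * occUpTo (fun i => Fin.castLE h (v i)) k (v k) := by
  have hpos : 0 < occUpTo (fun i => Fin.castLE h (v i)) k (v k) :=
    Finset.card_pos.2 ⟨k, by simp⟩
  rcases lt_or_gt_of_ne hs with hlt | hgt
  · have hN : occUpTo (fun i => Fin.castLE h (v i)) k s ≤ N :=
      (Finset.card_le_univ _).trans (by simp)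
    calc _ ≤ w s * N := Nat.mul_le_mul_left _ hN
      _ < w (v k) := hw' _ _ hlt
      _ ≤ _ := Nat.le_mul_of_pos_right _ hpos
  · have h0 : occUpTo (fun i => Fin.castLE h (v i)) k s = 0 := by
      refine Finset.card_eq_zero.2 (Finset.filter_eq_empty_iff.2 ?_)
      rintro i - ⟨hik, he⟩
      have : s = v i := Fin.ext (by simpa using he)
      exact absurd (hv hik) (not_le.2 (this ▸ hgt))
    rw [h0, mul_zero]
    exact Nat.mul_pos (hw _) hpos

lemma wordExp_lt {N m R : ℕ} (h : R ≤ m) {w : Fin R → ℕ} (hw : ∀ r, 0 < w r)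
    (hw' : ∀ s r, s < r → w s * N < w r) {v : Fin N → Fin R} (hv : Monotone v)
    {ρ : Fin N → Fin R} (hρ : ρ ≠ v) :
    wordExp w (fun i => Fin.castLE h (v i)) ρ < wordExp w (fun i => Fin.castLE h (v i)) v := by
  obtain ⟨k, hk⟩ := Function.ne_iff.1 hρ
  refine Finset.sum_lt_sum (fun i _ => ?_)
    ⟨k, Finset.mem_univ k, weight_occUpTo_lt h hw hw' hv k hk⟩
  by_cases hi : ρ i = v i
  · rw [hi]
  · exact (weight_occUpTo_lt h hw hw' hv i hi).le

/-! ### Nonsingularity for large `z` -/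

/-- A matrix family that tends to the identity after rescaling rows and columns is eventually
nonsingular. -/
lemma eventually_det_ne_zero {P : Type*} [Fintype P] [DecidableEq P] (F : ℝ → Matrix P P ℝ)
    (α β : P → ℝ → ℝ)
    (h : ∀ p q, Tendsto (fun y => α p y * (β q y * F y p q)) atTop
      (𝓝 ((1 : Matrix P P ℝ) p q))) :
    ∀ᶠ y in atTop, (F y).det ≠ 0 := by
  have h1 : Tendsto (fun y => Matrix.of fun p q => α p y * (β q y * F y p q)) atTop
      (𝓝 (1 : Matrix P P ℝ)) :=
    tendsto_pi_nhds.2 fun p => tendsto_pi_nhds.2 fun q => h p q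
  have h2 := ((continuous_id.matrix_det (n := P) (R := ℝ)).tendsto 1).comp h1
  have h3 := h2.eventually_ne (b₂ := 0) (by simp)
  filter_upwards [h3] with y hy h0
  apply hy
  have e1 := Matrix.det_mul_column (fun p => α p y) (Matrix.of fun p q => β q y * F y p q)
  have e2 := Matrix.det_mul_row (fun q => β q y) (F y)
  simp only [Function.comp, id]
  simp only [Matrix.of_apply] at e1
  rw [e1, e2, h0, mul_zero, mul_zero]

lemma tendsto_inv_mul_pow {a b : ℕ} (hab : a < b) :
    Tendsto (fun y : ℝ => (y ^ b)⁻¹ * y ^ a) atTop (𝓝 0) := by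
  simpa [div_eq_inv_mul] using tendsto_pow_div_pow_atTop_zero (𝕜 := ℝ) hab

lemma tendsto_inv_mul_pow_self (a : ℕ) :
    Tendsto (fun y : ℝ => (y ^ a)⁻¹ * y ^ a) atTop (𝓝 1) := by
  refine tendsto_const_nhds.congr' ?_
  filter_upwards [eventually_ne_atTop 0] with y hy
  exact (inv_mul_cancel₀ (pow_ne_zero _ hy)).symm

lemma eventually_row_det {N R m : ℕ} (h : R ≤ m) {w : Fin R → ℕ} (hw : ∀ r, 0 < w r)
    (v : Sym (Fin R) N → Fin N → Fin R) (hv : ∀ q, content (v q) = q) :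
    ∀ᶠ y : ℝ in atTop, ((rowFactor N m w (y ^ 2)).submatrix
      (fun q i => Fin.castLE h (v q i)) id).det ≠ 0 := by
  refine eventually_det_ne_zero _ (fun q y => (y ^ pairing w q q)⁻¹)
    (fun p y => (y ^ pairing w p p)⁻¹) fun q p => ?_
  have e : ∀ y : ℝ, (y ^ pairing w q q)⁻¹ * ((y ^ pairing w p p)⁻¹ *
      ((rowFactor N m w (y ^ 2)).submatrix (fun q i => Fin.castLE h (v q i)) id) q p) =
      (y ^ (pairing w q q + pairing w p p))⁻¹ * y ^ (2 * pairing w q p) := fun y => by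
    simp only [Matrix.submatrix_apply, rowFactor, Matrix.of_apply, id, rowExp_eq_pairing, hv]
    rw [pow_add, mul_inv, pow_mul, mul_assoc]
  simp only [e]
  by_cases hqp : q = p
  · subst hqp
    rw [Matrix.one_apply_eq, ← two_mul]
    exact tendsto_inv_mul_pow_self _
  · rw [Matrix.one_apply_ne hqp]
    exact tendsto_inv_mul_pow (two_mul_pairing_lt hw hqp)

lemma eventually_col_det {N R m : ℕ} (h : R ≤ m) {w : Fin R → ℕ} (hw : ∀ r, 0 < w r)
    (hw' : ∀ s r, s < r → w s * N < w r)
    (v : Sym (Fin R) N → Fin N → Fin R) (hv : ∀ q, content (v q) = q)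
    (hmono : ∀ q, Monotone (v q)) :
    ∀ᶠ z : ℝ in atTop, ((colFactor N m w z).submatrix id
      (fun q i => Fin.castLE h (v q i))).det ≠ 0 := by
  refine eventually_det_ne_zero _ (fun _ _ => 1)
    (fun q z => (z ^ wordExp w (fun i => Fin.castLE h (v q i)) (v q))⁻¹) fun p q => ?_
  simp only [Matrix.submatrix_apply, colFactor, Matrix.of_apply, id, one_mul, Finset.mul_sum]
  have hone : (1 : Matrix (Sym (Fin R) N) (Sym (Fin R) N) ℝ) p q =
      ∑ ρ : Fin N → Fin R, if ρ = v q then (if q = p then 1 else 0) else 0 := by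
    simp [Matrix.one_apply, eq_comm]
  rw [hone]
  refine tendsto_finsetSum _ fun ρ _ => ?_
  by_cases hρ : ρ = v q
  · subst hρ
    simp only [hv, if_true]
    by_cases hqp : q = p
    · simp only [hqp, if_true]
      exact tendsto_inv_mul_pow_self _
    · simp [hqp]
  · simp only [hρ, if_false]
    by_cases hp : content ρ = p
    · simp only [hp, if_true]
      exact tendsto_inv_mul_pow (wordExp_lt h hw hw' (hmono q) hρ)
    · simp [hp]

/-! ### Factorization of the matricization -/

/-- Expansion of the product of sums over words, grouped by the content of the word. -/
lemma entry_eq_sum {N m R : ℕ} (w : Fin R → ℕ) (z : ℝ) (u v : Fin N → Fin m) :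
    ∏ k : Fin N, ∑ r : Fin R, z ^ (w r * occ u r) * z ^ (w r * occUpTo v k r) =
      (rowFactor N m w z * colFactor N m w z) u v := by
  rw [Fintype.prod_sum, Matrix.mul_apply]
  simp only [rowFactor, colFactor, Matrix.of_apply, Finset.mul_sum]
  rw [Finset.sum_comm]
  refine Finset.sum_congr rfl fun ρ _ => ?_
  simp only [mul_ite, mul_zero, Finset.sum_ite_eq, Finset.mem_univ, if_true]
  rw [Finset.prod_mul_distrib, Finset.prod_pow_eq_pow_sum, Finset.prod_pow_eq_pow_sum]
  congr 2
  rw [rowExp, coe_content, Multiset.map_map]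
  rfl

lemma prod_ite_eq_pow {ι : Type*} [Fintype ι] (P : ι → Prop) [DecidablePred P] (z : ℝ) (a : ℕ) :
    ∏ i, (if P i then z ^ a else 1) = z ^ (a * (Finset.univ.filter P).card) := by
  rw [Finset.prod_ite, Finset.prod_const, Finset.prod_const_one, mul_one, pow_mul]

/-- The product over `j ∈ {1, …, T/2 + 1 + k}` splits into the whole row tuple and the first `k + 1`
entries of the column tuple. -/
lemma prod_join {T m R : ℕ} (hT2 : 0 < T / 2) (u v : Fin (T / 2) → Fin m) (r : Fin R)
    (z : ℝ) (a : ℕ) (k : Fin (T / 2)) :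
    ∏ j ∈ Finset.Icc 1 (T / 2 + 1 + k),
        (if (r : ℕ) = (join1 (M := m) (T := T) hT2 u v j : ℕ) then z ^ a else 1) =
      z ^ (a * occ u r) * z ^ (a * occUpTo v k r) := by
  have hk := k.2
  have hI : Finset.Icc 1 (T / 2 + 1 + (k : ℕ)) = Finset.Ico 1 (T / 2 + (k + 1) + 1) := by
    ext; simp; omega
  rw [hI, Finset.prod_Ico_eq_prod_range, Nat.add_sub_cancel, Finset.prod_range_add]
  congr 1
  · rw [Finset.prod_range, occ, ← prod_ite_eq_pow]
    refine Finset.prod_congr rfl fun i _ => ?_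
    have : join1 (M := m) (T := T) hT2 u v (1 + i) = u i := by
      have hi : 1 + (i : ℕ) - 1 < T / 2 := by omega
      rw [join1, dif_pos hi]
      congr 1; ext; simp
    rw [this]
  · have hr : Finset.range ((k : ℕ) + 1) = (Finset.range (T / 2)).filter (· ≤ (k : ℕ)) := by
      ext; simp; omega
    rw [hr, Finset.prod_filter, Finset.prod_range, occUpTo, ← prod_ite_eq_pow]
    refine Finset.prod_congr rfl fun i _ => ?_
    have : join1 (M := m) (T := T) hT2 u v (1 + (T / 2 + i)) = v i := by
      have hi : ¬ (1 + (T / 2 + (i : ℕ)) - 1 < T / 2) := by omega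
      rw [join1, dif_neg hi]
      congr 1; ext
      have : 1 + (T / 2 + (i : ℕ)) - 1 - T / 2 = i := by omega
      simp only [this]
      exact Nat.mod_eq_of_lt i.2
    rw [this, ite_and]
    rfl

end DeepRac

open DeepRac in
/-- Let `T` be even, `R̄ ≤ M`, and `Z ∈ ℝ^{R̄×M}` have entries
`Z_{rd} = z^{Ω^r δ_{rd}}` for some `z ≠ 0` and positive integer `Ω`.  Let `B` be the
Start–End matricization of the order-`T` tensor
`B̃_{d_1,…,d_T} = ∏_{t=T/2+1}^T ∑_{r=1}^{R̄} ∏_{j=1}^t Z_{r d_j}`.  Then there exist a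
positive integer `Ω` and a value `z ∈ ℝ \ {0}` such that
`rank B = multiset(R̄, T/2) = binom(R̄ + T/2 − 1, T/2)`. -/
theorem deep_rac_grid_matricization_rank (T Rb M : ℕ) (hT : 0 < T) (hTeven : Even T)
    (hRb : 0 < Rb) (hM : 0 < M) (hRM : Rb ≤ M) :
    ∃ Ω : ℕ, 0 < Ω ∧ ∃ z : ℝ, z ≠ 0 ∧
      (Matrix.of fun row col : Fin (T / 2) → Fin M =>
          ∏ t ∈ Finset.Icc (T / 2 + 1) T, ∑ r : Fin Rb,
            ∏ j ∈ Finset.Icc 1 t,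
              (if (r : ℕ) = ((join1 (M := M) (T := T)
                    (by obtain ⟨n, hn⟩ := hTeven; omega) row col) j : ℕ)
                then z ^ (Ω ^ ((r : ℕ) + 1)) else 1)).rank
        = Nat.choose (Rb + T / 2 - 1) (T / 2) := by
  have hT2 : 0 < T / 2 := by obtain ⟨n, hn⟩ := hTeven; omega
  have hTT : T = T / 2 + T / 2 := by obtain ⟨n, hn⟩ := hTeven; omega
  set w : Fin Rb → ℕ := fun r => (T / 2 + 1) ^ ((r : ℕ) + 1) with hwdef
  have hw : ∀ r, 0 < w r := fun r => by positivity
  have hw' : ∀ s r, s < r → w s * (T / 2) < w r := fun s r hsr => by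
    calc w s * (T / 2) < w s * (T / 2 + 1) := Nat.mul_lt_mul_of_pos_left (by omega) (hw s)
      _ = (T / 2 + 1) ^ ((s : ℕ) + 1 + 1) := (pow_succ _ _).symm
      _ ≤ w r := Nat.pow_le_pow_right (by omega) (by have : (s : ℕ) < r := hsr; omega)
  choose v hmono hv using fun q : Sym (Fin Rb) (T / 2) => exists_monotone_content q
  have hsq : Tendsto (fun y : ℝ => y ^ 2) atTop atTop := tendsto_pow_atTop (by norm_num)
  obtain ⟨y, hA, hC, hy⟩ := ((eventually_row_det hRM hw v hv).and
    ((hsq.eventually (eventually_col_det hRM hw hw' v hv hmono)).and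
      (eventually_gt_atTop 0))).exists
  refine ⟨T / 2 + 1, by omega, y ^ 2, by positivity, ?_⟩
  have hB : (Matrix.of fun row col : Fin (T / 2) → Fin M =>
          ∏ t ∈ Finset.Icc (T / 2 + 1) T, ∑ r : Fin Rb,
            ∏ j ∈ Finset.Icc 1 t,
              (if (r : ℕ) = ((join1 (M := M) (T := T) hT2 row col) j : ℕ)
                then (y ^ 2) ^ ((T / 2 + 1) ^ ((r : ℕ) + 1)) else 1)) =
      rowFactor (T / 2) M w (y ^ 2) * colFactor (T / 2) M w (y ^ 2) := by
    ext row col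
    rw [← entry_eq_sum, Matrix.of_apply]
    have hI : Finset.Icc (T / 2 + 1) T = Finset.Ico (T / 2 + 1) (T + 1) := by ext; simp
    have hlen : T + 1 - (T / 2 + 1) = T / 2 := by omega
    rw [hI, Finset.prod_Ico_eq_prod_range, hlen, Finset.prod_range]
    exact Finset.prod_congr rfl fun k _ => Finset.sum_congr rfl fun r _ =>
      prod_join hT2 row col r (y ^ 2) (w r) k
  rw [hB]
  have hcard : Fintype.card (Sym (Fin Rb) (T / 2)) = Nat.choose (Rb + T / 2 - 1) (T / 2) := by
    rw [Sym.card_sym_eq_choose, Fintype.card_fin]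
  rw [← hcard]
  apply le_antisymm
  · exact (Matrix.rank_mul_le_left _ _).trans (Matrix.rank_le_card_width _)
  · -- The square submatrix on the nondecreasing words is invertible, hence of full rank.
    refine le_trans (Matrix.rank_of_isUnit
      ((rowFactor (T / 2) M w (y ^ 2) * colFactor (T / 2) M w (y ^ 2)).submatrix
        (fun q i => Fin.castLE hRM (v q i)) (fun q i => Fin.castLE hRM (v q i))) ?_).ge
      (Matrix.rank_submatrix_le _ _ _)
    rw [Matrix.submatrix_mul _ _ _ id _ Function.bijective_id, Matrix.isUnit_iff_isUnit_det,
      Matrix.det_mul]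
    exact (mul_ne_zero hA hC).isUnit
end
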